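/- Under the adapted pure-frontal setup with focal data, for j = 1,2 the vector field x_j is normal to the focal surface C_j at every point: ⟨(C_j)_u, x_j⟩ = 0 and ⟨(C_j)_v, x_j⟩ = 0 everywhere. -/

import Mathlib

open Filter

noncomputable section

/-- Vectors in ℝ³, modeled as `Fin 3 → ℝ`. -/
abbrev R3 : Type := Fin 3 → ℝ

/-- The Euclidean inner product on ℝ³. -/
def dot3 (a b : R3) : ℝ := a 0 * b 0 + a 1 * b 1 + a 2 * b 2

/-- The Euclidean norm on ℝ³. -/
def norm3 (a : R3) : ℝ := Real.sqrt (dot3 a a)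

/-- Partial derivative in the `u`-direction. -/
def pu {E : Type*} [NormedAddCommGroup E] [NormedSpace ℝ E] (F : ℝ × ℝ → E) (p : ℝ × ℝ) : E :=
  fderiv ℝ F p (1, 0)

/-- Partial derivative in the `v`-direction. -/
def pv {E : Type*} [NormedAddCommGroup E] [NormedSpace ℝ E] (F : ℝ × ℝ → E) (p : ℝ × ℝ) : E :=
  fderiv ℝ F p (0, 1)

/-- The adapted pure-frontal setup: `f` is a frontal with unit normal `ν`,
`f_v = v·h`, `ν_v = v·ν₁`, the frame `{f_u, h, ν}` is linearly independent everywhere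
and orthonormal along the `u`-axis. -/
structure AdaptedPureFrontal (f ν h ν₁ : ℝ × ℝ → R3) : Prop where
  smooth_f : ContDiff ℝ (⊤ : ℕ∞) f
  smooth_ν : ContDiff ℝ (⊤ : ℕ∞) ν
  smooth_h : ContDiff ℝ (⊤ : ℕ∞) h
  smooth_ν₁ : ContDiff ℝ (⊤ : ℕ∞) ν₁
  unit_ν : ∀ p, dot3 (ν p) (ν p) = 1
  orth_fu_ν : ∀ p, dot3 (pu f p) (ν p) = 0
  orth_fv_ν : ∀ p, dot3 (pv f p) (ν p) = 0
  fv_eq : ∀ p : ℝ × ℝ, pv f p = p.2 • h p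
  νv_eq : ∀ p : ℝ × ℝ, pv ν p = p.2 • ν₁ p
  indep : ∀ p, LinearIndependent ℝ ![pu f p, h p, ν p]
  adapted_fu : ∀ u : ℝ, dot3 (pu f (u, 0)) (pu f (u, 0)) = 1
  adapted_h : ∀ u : ℝ, dot3 (h (u, 0)) (h (u, 0)) = 1
  adapted_fu_h : ∀ u : ℝ, dot3 (pu f (u, 0)) (h (u, 0)) = 0
  adapted_h_ν : ∀ u : ℝ, dot3 (h (u, 0)) (ν (u, 0)) = 0

/-- Ẽ = ⟨f_u, f_u⟩. -/
def Et (f : ℝ × ℝ → R3) (p : ℝ × ℝ) : ℝ := dot3 (pu f p) (pu f p)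

/-- F̃ = ⟨f_u, h⟩. -/
def Ft (f h : ℝ × ℝ → R3) (p : ℝ × ℝ) : ℝ := dot3 (pu f p) (h p)

/-- G̃ = ⟨h, h⟩. -/
def Gt (h : ℝ × ℝ → R3) (p : ℝ × ℝ) : ℝ := dot3 (h p) (h p)

/-- L̃ = −⟨f_u, ν_u⟩. -/
def Lt (f ν : ℝ × ℝ → R3) (p : ℝ × ℝ) : ℝ := -dot3 (pu f p) (pu ν p)

/-- M̃ = −⟨h, ν_u⟩. -/
def Mt (h ν : ℝ × ℝ → R3) (p : ℝ × ℝ) : ℝ := -dot3 (h p) (pu ν p)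

/-- Ñ₁ = −⟨h, ν₁⟩. -/
def Nt1 (h ν₁ : ℝ × ℝ → R3) (p : ℝ × ℝ) : ℝ := -dot3 (h p) (ν₁ p)

/-- The Gaussian curvature K = (L̃Ñ₁ − M̃²)/(ẼG̃ − F̃²). -/
def Kg (f ν h ν₁ : ℝ × ℝ → R3) (p : ℝ × ℝ) : ℝ :=
  (Lt f ν p * Nt1 h ν₁ p - Mt h ν p ^ 2) / (Et f p * Gt h p - Ft f h p ^ 2)

/-- The mean curvature H = (ẼÑ₁ − 2F̃M̃ + G̃L̃)/(2(ẼG̃ − F̃²)). -/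
def Hm (f ν h ν₁ : ℝ × ℝ → R3) (p : ℝ × ℝ) : ℝ :=
  (Et f p * Nt1 h ν₁ p - 2 * Ft f h p * Mt h ν p + Gt h p * Lt f ν p) /
    (2 * (Et f p * Gt h p - Ft f h p ^ 2))

/-- The principal curvature κ = H + ε√(H² − K); `ε = 1` gives κ₁ and `ε = -1` gives κ₂. -/
def kap (f ν h ν₁ : ℝ × ℝ → R3) (ε : ℝ) (p : ℝ × ℝ) : ℝ :=
  Hm f ν h ν₁ p + ε * Real.sqrt (Hm f ν h ν₁ p ^ 2 - Kg f ν h ν₁ p)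

/-- First component of the principal vector field V = −v(M̃ − κF̃)∂_u + (L̃ − κẼ)∂_v. -/
def V1c (f ν h ν₁ : ℝ × ℝ → R3) (ε : ℝ) (p : ℝ × ℝ) : ℝ :=
  -(p.2 * (Mt h ν p - kap f ν h ν₁ ε p * Ft f h p))

/-- Second component of the principal vector field V = −v(M̃ − κF̃)∂_u + (L̃ − κẼ)∂_v. -/
def V2c (f ν h ν₁ : ℝ × ℝ → R3) (ε : ℝ) (p : ℝ × ℝ) : ℝ :=
  Lt f ν p - kap f ν h ν₁ ε p * Et f p

/-- Directional derivative of `g` along the principal vector field V. -/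
def VD (f ν h ν₁ : ℝ × ℝ → R3) (ε : ℝ) {E : Type*} [NormedAddCommGroup E] [NormedSpace ℝ E]
    (g : ℝ × ℝ → E) (p : ℝ × ℝ) : E :=
  V1c f ν h ν₁ ε p • pu g p + V2c f ν h ν₁ ε p • pv g p

/-- The radius of principal curvature ρ = 1/κ. -/
def rho (f ν h ν₁ : ℝ × ℝ → R3) (ε : ℝ) (p : ℝ × ℝ) : ℝ := (kap f ν h ν₁ ε p)⁻¹

/-- The focal surface C = f + ρ·ν. -/
def Cf (f ν h ν₁ : ℝ × ℝ → R3) (ε : ℝ) (p : ℝ × ℝ) : R3 :=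
  f p + rho f ν h ν₁ ε p • ν p

/-- The normal direction x = −(M̃ − κF̃)·f_u + (L̃ − κẼ)·h of the focal surface. -/
def xj (f ν h ν₁ : ℝ × ℝ → R3) (ε : ℝ) (p : ℝ × ℝ) : R3 :=
  (-(Mt h ν p - kap f ν h ν₁ ε p * Ft f h p)) • pu f p +
    (Lt f ν p - kap f ν h ν₁ ε p * Et f p) • h p

/-- The unit normal e = x/‖x‖ of the focal surface. -/
def ej (f ν h ν₁ : ℝ × ℝ → R3) (ε : ℝ) (p : ℝ × ℝ) : R3 :=
  (norm3 (xj f ν h ν₁ ε p))⁻¹ • xj f ν h ν₁ ε p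

/-- The limiting normal curvature κ_ν(u) = L̃(u,0). -/
def kν (f ν : ℝ × ℝ → R3) (u : ℝ) : ℝ := Lt f ν (u, 0)

/-- The cuspidal torsion κ_t(u) = M̃(u,0). -/
def kt (h ν : ℝ × ℝ → R3) (u : ℝ) : ℝ := Mt h ν (u, 0)

/-- The bias r_b(u) = 3Ñ₁(u,0). -/
def rb (h ν₁ : ℝ × ℝ → R3) (u : ℝ) : ℝ := 3 * Nt1 h ν₁ (u, 0)

/-- The secondary cuspidal curvature r_c(u) = 24((Ñ₁)_v − 2F̃_vM̃ − G̃_vÑ₁)(u,0). -/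
def rc (f ν h ν₁ : ℝ × ℝ → R3) (u : ℝ) : ℝ :=
  24 * (pv (Nt1 h ν₁) (u, 0) - 2 * pv (Ft f h) (u, 0) * Mt h ν (u, 0) -
    pv (Gt h) (u, 0) * Nt1 h ν₁ (u, 0))

/-- The singular curvature κ_s(u) = ⟨f_uu, h⟩(u,0). -/
def ks (f h : ℝ × ℝ → R3) (u : ℝ) : ℝ := dot3 (pu (pu f) (u, 0)) (h (u, 0))

/-- The rank of the differential of `F` at `p`. -/
def rankAt (F : ℝ × ℝ → R3) (p : ℝ × ℝ) : ℕ :=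
  Module.finrank ℝ (LinearMap.range (fderiv ℝ F p).toLinearMap)

/-!
Write `I` and `II` for the fundamental forms with coefficients `Ẽ, F̃, G̃` and `L̃, M̃, Ñ₁` in the
frame `{f_u, h}`. The principal curvature `κ` is a root of `det (II - κ I) = 0`, and `x` is the
vector of the kernel of `II - κ I` read off from the first row. Since `ρκ = 1`, every directional
derivative of the focal surface is `C_w = ρ(κ f_w + ν_w) + ρ_w ν`. Here `x ⊥ ν`, while
`⟨κ f_w + ν_w, x⟩` is, up to the factor `v` when `w = ∂_v`, an entry of `-(II - κ I) x = 0`.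
-/

section Calculus

variable {𝕜 E F ι : Type*} [NontriviallyNormedField 𝕜] [NormedAddCommGroup E] [NormedSpace 𝕜 E]
  [NormedAddCommGroup F] [NormedSpace 𝕜 F] [Fintype ι] {A B : E → ι → 𝕜} {x : E}

theorem differentiableAt_dotProduct (hA : DifferentiableAt 𝕜 A x) (hB : DifferentiableAt 𝕜 B x) :
    DifferentiableAt 𝕜 (fun y ↦ A y ⬝ᵥ B y) x :=
  .fun_sum fun i _ ↦ (differentiableAt_pi.1 hA i).mul (differentiableAt_pi.1 hB i)

theorem fderiv_dotProduct_apply (hA : DifferentiableAt 𝕜 A x) (hB : DifferentiableAt 𝕜 B x)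
    (w : E) :
    fderiv 𝕜 (fun y ↦ A y ⬝ᵥ B y) x w = fderiv 𝕜 A x w ⬝ᵥ B x + A x ⬝ᵥ fderiv 𝕜 B x w := by
  have hAi := differentiableAt_pi.1 hA
  have hBi := differentiableAt_pi.1 hB
  simp only [dotProduct, ← Finset.sum_add_distrib]
  rw [fderiv_fun_sum fun i _ ↦ (hAi i).fun_mul (hBi i), sum_apply]
  refine Finset.sum_congr rfl fun i _ ↦ ?_
  simp [fderiv_fun_mul (hAi i) (hBi i), fderiv_apply hA, fderiv_apply hB, add_comm, mul_comm]

theorem differentiable_fderiv_apply {g : E → F} (hg : ContDiff 𝕜 2 g) (w : E) :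
    Differentiable 𝕜 (fun y ↦ fderiv 𝕜 g y w) :=
  ((hg.fderiv_right (m := 1) le_rfl).clm_apply contDiff_const).differentiable one_ne_zero

end Calculus

theorem pv_pu_eq_pu_pv {E : Type*} [NormedAddCommGroup E] [NormedSpace ℝ E] {g : ℝ × ℝ → E}
    (hg : ContDiff ℝ 2 g) (p : ℝ × ℝ) : pv (pu g) p = pu (pv g) p := by
  have hdg : DifferentiableAt ℝ (fderiv ℝ g) p :=
    (hg.fderiv_right (m := 1) le_rfl).differentiable one_ne_zero p
  have happly (w w' : ℝ × ℝ) :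
      fderiv ℝ (fun q ↦ fderiv ℝ g q w) p w' = fderiv ℝ (fderiv ℝ g) p w' w := by
    simp [fderiv_clm_apply hdg (differentiableAt_const w)]
  have hsymm : IsSymmSndFDerivAt ℝ g p := hg.contDiffAt.isSymmSndFDerivAt (by simp)
  calc pv (pu g) p = fderiv ℝ (fderiv ℝ g) p (0, 1) (1, 0) := happly _ _
    _ = fderiv ℝ (fderiv ℝ g) p (1, 0) (0, 1) := hsymm.eq _ _
    _ = pu (pv g) p := (happly _ _).symm

theorem sq_sub_two_mul_add_eq_zero_of_eq_add_mul_sqrt {a b ε x : ℝ} (hε : ε = 1 ∨ ε = -1)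
    (hab : 0 ≤ a ^ 2 - b) (hx : x = a + ε * √(a ^ 2 - b)) : x ^ 2 - 2 * a * x + b = 0 := by
  have hsqrt := Real.sq_sqrt hab
  have hε_sq : ε ^ 2 = 1 := sq_eq_one_iff.2 hε
  rw [hx]
  linear_combination ε ^ 2 * hsqrt + (a ^ 2 - b) * hε_sq

section Dot3

theorem dot3_eq_dotProduct (a b : R3) : dot3 a b = a ⬝ᵥ b :=
  (Matrix.vec3_dotProduct a b).symm

theorem dot3_comm (a b : R3) : dot3 a b = dot3 b a := by
  simp only [dot3_eq_dotProduct, dotProduct_comm]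

theorem dot3_add_left (a b c : R3) : dot3 (a + b) c = dot3 a c + dot3 b c := by
  simp only [dot3_eq_dotProduct, add_dotProduct]

theorem dot3_smul_left (r : ℝ) (a b : R3) : dot3 (r • a) b = r * dot3 a b := by
  simp only [dot3_eq_dotProduct, smul_dotProduct, smul_eq_mul]

theorem dot3_add_right (a b c : R3) : dot3 a (b + c) = dot3 a b + dot3 a c := by
  simp only [dot3_eq_dotProduct, dotProduct_add]

theorem dot3_smul_right (r : ℝ) (a b : R3) : dot3 a (r • b) = r * dot3 a b := by
  simp only [dot3_eq_dotProduct, dotProduct_smul, smul_eq_mul]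

open Matrix in
theorem gram_det_ne_zero_of_linearIndependent {a b : R3} (hab : LinearIndependent ℝ ![a, b]) :
    dot3 a a * dot3 b b - dot3 a b ^ 2 ≠ 0 := by
  have hcross : (a ⨯₃ b) ⬝ᵥ (a ⨯₃ b) ≠ 0 :=
    dotProduct_self_eq_zero.not.2 (crossProduct_ne_zero_iff_linearIndependent.2 hab)
  rwa [cross_dot_cross, dotProduct_comm b a, ← sq, ← dot3_eq_dotProduct, ← dot3_eq_dotProduct,
    ← dot3_eq_dotProduct] at hcross

variable {E : Type*} [NormedAddCommGroup E] [NormedSpace ℝ E] {A B : E → R3} {x : E}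

theorem differentiableAt_dot3 (hA : DifferentiableAt ℝ A x) (hB : DifferentiableAt ℝ B x) :
    DifferentiableAt ℝ (fun y ↦ dot3 (A y) (B y)) x := by
  simpa only [dot3_eq_dotProduct] using differentiableAt_dotProduct hA hB

theorem dot3_fderiv_left_eq_neg_of_orthogonal (hA : DifferentiableAt ℝ A x)
    (hB : DifferentiableAt ℝ B x) (hAB : ∀ y, dot3 (A y) (B y) = 0) (w : E) :
    dot3 (fderiv ℝ A x w) (B x) = -dot3 (A x) (fderiv ℝ B x w) := by
  simp only [dot3_eq_dotProduct] at hAB ⊢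
  have hderiv := fderiv_dotProduct_apply hA hB w
  simp only [hAB, fderiv_fun_const, Pi.zero_apply, zero_apply] at hderiv
  exact eq_neg_of_add_eq_zero_left hderiv.symm

end Dot3

/-- A frontal `f` with normal field `ν` (of any length) and frame `{f_u, h}` of the limiting tangent
planes, where `f_v` and `ν_v` are multiples of `h` and `ν₁` by a common function `σ`. Taking
`σ(u, v) = v` gives pure frontals, `σ = 1` regular surfaces. -/
structure FrontalFrame (f ν h ν₁ : ℝ × ℝ → R3) (σ : ℝ × ℝ → ℝ) : Prop where
  contDiff_f : ContDiff ℝ 2 f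
  contDiff_ν : ContDiff ℝ 2 ν
  differentiable_h : Differentiable ℝ h
  differentiable_ν₁ : Differentiable ℝ ν₁
  dot3_pu_ν : ∀ p, dot3 (pu f p) (ν p) = 0
  dot3_h_ν : ∀ p, dot3 (h p) (ν p) = 0
  pv_f : ∀ p, pv f p = σ p • h p
  pv_ν : ∀ p, pv ν p = σ p • ν₁ p
  linearIndependent : ∀ p, LinearIndependent ℝ ![pu f p, h p]

theorem AdaptedPureFrontal.dot3_h_ν {f ν h ν₁ : ℝ × ℝ → R3} (H : AdaptedPureFrontal f ν h ν₁)
    (p : ℝ × ℝ) : dot3 (h p) (ν p) = 0 := by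
  obtain ⟨u, v⟩ := p
  rcases eq_or_ne v 0 with rfl | hv
  · exact H.adapted_h_ν u
  · have hfv := H.orth_fv_ν (u, v)
    rw [H.fv_eq, dot3_smul_left] at hfv
    exact (mul_eq_zero.1 hfv).resolve_left hv

theorem AdaptedPureFrontal.frontalFrame {f ν h ν₁ : ℝ × ℝ → R3}
    (H : AdaptedPureFrontal f ν h ν₁) : FrontalFrame f ν h ν₁ Prod.snd where
  contDiff_f := contDiff_infty.1 H.smooth_f 2
  contDiff_ν := contDiff_infty.1 H.smooth_ν 2
  differentiable_h := H.smooth_h.differentiable (by simp)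
  differentiable_ν₁ := H.smooth_ν₁.differentiable (by simp)
  dot3_pu_ν := H.orth_fu_ν
  dot3_h_ν := H.dot3_h_ν
  pv_f := H.fv_eq
  pv_ν := H.νv_eq
  linearIndependent p := by
    have hpair : LinearIndependent ℝ (![pu f p, h p, ν p] ∘ Fin.castSucc) :=
      (H.indep p).comp _ (Fin.castSucc_injective 2)
    convert hpair using 1
    ext i : 1
    fin_cases i <;> rfl

theorem dot3_xj_right (f ν h ν₁ : ℝ × ℝ → R3) (ε : ℝ) (p : ℝ × ℝ) (y : R3) :
    dot3 y (xj f ν h ν₁ ε p) =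
      -(Mt h ν p - kap f ν h ν₁ ε p * Ft f h p) * dot3 (pu f p) y +
        (Lt f ν p - kap f ν h ν₁ ε p * Et f p) * dot3 (h p) y := by
  rw [xj, dot3_add_right, dot3_smul_right, dot3_smul_right, dot3_comm y, dot3_comm y]

theorem dot3_smul_pu_add_pu_xj (f ν h ν₁ : ℝ × ℝ → R3) (ε : ℝ) (p : ℝ × ℝ) :
    dot3 (kap f ν h ν₁ ε p • pu f p + pu ν p) (xj f ν h ν₁ ε p) = 0 := by
  simp only [dot3_xj_right, dot3_add_right, dot3_smul_right, dot3_comm (h p) (pu f p), Et, Ft, Lt,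
    Mt]
  ring

namespace FrontalFrame

variable {f ν h ν₁ : ℝ × ℝ → R3} {σ : ℝ × ℝ → ℝ} {ε : ℝ} {p : ℝ × ℝ}

theorem gram_det_ne_zero (S : FrontalFrame f ν h ν₁ σ) (p : ℝ × ℝ) :
    Et f p * Gt h p - Ft f h p ^ 2 ≠ 0 :=
  gram_det_ne_zero_of_linearIndependent (S.linearIndependent p)

theorem differentiableAt_kap (S : FrontalFrame f ν h ν₁ σ)
    (hHK : Hm f ν h ν₁ p ^ 2 - Kg f ν h ν₁ p ≠ 0) : DifferentiableAt ℝ (kap f ν h ν₁ ε) p := by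
  have hfu : DifferentiableAt ℝ (pu f) p := differentiable_fderiv_apply S.contDiff_f _ p
  have hνu : DifferentiableAt ℝ (pu ν) p := differentiable_fderiv_apply S.contDiff_ν _ p
  have hh := S.differentiable_h p
  have hE : DifferentiableAt ℝ (Et f) p := differentiableAt_dot3 hfu hfu
  have hF : DifferentiableAt ℝ (Ft f h) p := differentiableAt_dot3 hfu hh
  have hG : DifferentiableAt ℝ (Gt h) p := differentiableAt_dot3 hh hh
  have hL : DifferentiableAt ℝ (Lt f ν) p := (differentiableAt_dot3 hfu hνu).neg
  have hM : DifferentiableAt ℝ (Mt h ν) p := (differentiableAt_dot3 hh hνu).neg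
  have hN : DifferentiableAt ℝ (Nt1 h ν₁) p :=
    (differentiableAt_dot3 hh (S.differentiable_ν₁ p)).neg
  have hgram : DifferentiableAt ℝ (fun q ↦ Et f q * Gt h q - Ft f h q ^ 2) p :=
    (hE.mul hG).sub (hF.pow 2)
  have hgram_ne := S.gram_det_ne_zero p
  have hK : DifferentiableAt ℝ (Kg f ν h ν₁) p :=
    ((hL.mul hN).sub (hM.pow 2)).mul (hgram.inv hgram_ne)
  have hH : DifferentiableAt ℝ (Hm f ν h ν₁) p :=
    (((hE.mul hN).sub ((hF.const_mul 2).mul hM)).add (hG.mul hL)).mul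
      ((hgram.const_mul 2).inv (mul_ne_zero two_ne_zero hgram_ne))
  exact hH.add ((((hH.pow 2).sub hK).sqrt hHK).const_mul ε)

theorem det_second_sub_kap_mul_first_eq_zero (S : FrontalFrame f ν h ν₁ σ) (hε : ε = 1 ∨ ε = -1)
    (hHK : 0 ≤ Hm f ν h ν₁ p ^ 2 - Kg f ν h ν₁ p) :
    (Lt f ν p - kap f ν h ν₁ ε p * Et f p) * (Nt1 h ν₁ p - kap f ν h ν₁ ε p * Gt h p) -
      (Mt h ν p - kap f ν h ν₁ ε p * Ft f h p) ^ 2 = 0 := by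
  have hroot : kap f ν h ν₁ ε p ^ 2 - 2 * Hm f ν h ν₁ p * kap f ν h ν₁ ε p + Kg f ν h ν₁ p = 0 :=
    sq_sub_two_mul_add_eq_zero_of_eq_add_mul_sqrt hε hHK rfl
  have hH : Hm f ν h ν₁ p * (2 * (Et f p * Gt h p - Ft f h p ^ 2)) =
      Et f p * Nt1 h ν₁ p - 2 * Ft f h p * Mt h ν p + Gt h p * Lt f ν p :=
    div_mul_cancel₀ _ (mul_ne_zero two_ne_zero (S.gram_det_ne_zero p))
  have hK : Kg f ν h ν₁ p * (Et f p * Gt h p - Ft f h p ^ 2) =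
      Lt f ν p * Nt1 h ν₁ p - Mt h ν p ^ 2 :=
    div_mul_cancel₀ _ (S.gram_det_ne_zero p)
  linear_combination (Et f p * Gt h p - Ft f h p ^ 2) * hroot + kap f ν h ν₁ ε p * hH - hK

theorem dot3_pv_ν (S : FrontalFrame f ν h ν₁ σ) (p : ℝ × ℝ) : dot3 (pv f p) (ν p) = 0 := by
  rw [S.pv_f, dot3_smul_left, S.dot3_h_ν, mul_zero]

-- Both sides equal `-⟨f_uv, ν⟩`.
theorem dot3_pu_f_pv_ν (S : FrontalFrame f ν h ν₁ σ) (p : ℝ × ℝ) :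
    dot3 (pu f p) (pv ν p) = dot3 (pv f p) (pu ν p) := by
  have hν : DifferentiableAt ℝ ν p := S.contDiff_ν.differentiable two_ne_zero p
  have hfu : DifferentiableAt ℝ (pu f) p := differentiable_fderiv_apply S.contDiff_f _ p
  have hfv : DifferentiableAt ℝ (pv f) p := differentiable_fderiv_apply S.contDiff_f _ p
  have huv : dot3 (pv (pu f) p) (ν p) = -dot3 (pu f p) (pv ν p) :=
    dot3_fderiv_left_eq_neg_of_orthogonal hfu hν S.dot3_pu_ν _
  have hvu : dot3 (pu (pv f) p) (ν p) = -dot3 (pv f p) (pu ν p) :=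
    dot3_fderiv_left_eq_neg_of_orthogonal hfv hν S.dot3_pv_ν _
  rw [pv_pu_eq_pu_pv S.contDiff_f, hvu] at huv
  exact (neg_injective huv).symm

theorem dot3_smul_pv_add_pv_xj (S : FrontalFrame f ν h ν₁ σ) (hε : ε = 1 ∨ ε = -1)
    (hHK : 0 ≤ Hm f ν h ν₁ p ^ 2 - Kg f ν h ν₁ p) :
    dot3 (kap f ν h ν₁ ε p • pv f p + pv ν p) (xj f ν h ν₁ ε p) = 0 := by
  have hfu : dot3 (pu f p) (kap f ν h ν₁ ε p • pv f p + pv ν p) =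
      -σ p * (Mt h ν p - kap f ν h ν₁ ε p * Ft f h p) := by
    rw [dot3_add_right, S.dot3_pu_f_pv_ν, S.pv_f, dot3_smul_left, dot3_smul_right, dot3_smul_right,
      Mt, Ft]
    ring
  have hh : dot3 (h p) (kap f ν h ν₁ ε p • pv f p + pv ν p) =
      -σ p * (Nt1 h ν₁ p - kap f ν h ν₁ ε p * Gt h p) := by
    rw [dot3_add_right, S.pv_f, S.pv_ν, dot3_smul_right, dot3_smul_right, dot3_smul_right, Nt1, Gt]
    ring
  rw [dot3_xj_right, hfu, hh]
  linear_combination -σ p * S.det_second_sub_kap_mul_first_eq_zero hε hHK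

theorem dot3_ν_xj (S : FrontalFrame f ν h ν₁ σ) (p : ℝ × ℝ) :
    dot3 (ν p) (xj f ν h ν₁ ε p) = 0 := by
  rw [dot3_xj_right, S.dot3_pu_ν, S.dot3_h_ν, mul_zero, mul_zero, add_zero]

theorem fderiv_Cf_apply (S : FrontalFrame f ν h ν₁ σ)
    (hHK : Hm f ν h ν₁ p ^ 2 - Kg f ν h ν₁ p ≠ 0) (hκ : kap f ν h ν₁ ε p ≠ 0) (w : ℝ × ℝ) :
    fderiv ℝ (Cf f ν h ν₁ ε) p w =
      rho f ν h ν₁ ε p • (kap f ν h ν₁ ε p • fderiv ℝ f p w + fderiv ℝ ν p w) +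
        fderiv ℝ (rho f ν h ν₁ ε) p w • ν p := by
  have hf : DifferentiableAt ℝ f p := S.contDiff_f.differentiable two_ne_zero p
  have hν : DifferentiableAt ℝ ν p := S.contDiff_ν.differentiable two_ne_zero p
  have hρ : DifferentiableAt ℝ (rho f ν h ν₁ ε) p := (S.differentiableAt_kap hHK).inv hκ
  have hρκ : rho f ν h ν₁ ε p * kap f ν h ν₁ ε p = 1 := inv_mul_cancel₀ hκ
  have hC : HasFDerivAt (Cf f ν h ν₁ ε) _ p :=
    hf.hasFDerivAt.add (hρ.hasFDerivAt.smul hν.hasFDerivAt)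
  rw [hC.fderiv, smul_add, smul_smul, hρκ, one_smul, add_assoc]
  rfl

theorem dot3_fderiv_Cf_xj (S : FrontalFrame f ν h ν₁ σ)
    (hHK : Hm f ν h ν₁ p ^ 2 - Kg f ν h ν₁ p ≠ 0) (hκ : kap f ν h ν₁ ε p ≠ 0) (w : ℝ × ℝ) :
    dot3 (fderiv ℝ (Cf f ν h ν₁ ε) p w) (xj f ν h ν₁ ε p) =
      rho f ν h ν₁ ε p *
        dot3 (kap f ν h ν₁ ε p • fderiv ℝ f p w + fderiv ℝ ν p w) (xj f ν h ν₁ ε p) := by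
  rw [S.fderiv_Cf_apply hHK hκ, dot3_add_left, dot3_smul_left, dot3_smul_left, S.dot3_ν_xj,
    mul_zero, add_zero]

end FrontalFrame

theorem stmt_9_general {f ν h ν₁ : ℝ × ℝ → R3} {σ : ℝ × ℝ → ℝ} (S : FrontalFrame f ν h ν₁ σ)
    {ε : ℝ} (hε : ε = 1 ∨ ε = -1) {p : ℝ × ℝ} (hHK : 0 < Hm f ν h ν₁ p ^ 2 - Kg f ν h ν₁ p)
    (hκ : kap f ν h ν₁ ε p ≠ 0) :
    dot3 (pu (Cf f ν h ν₁ ε) p) (xj f ν h ν₁ ε p) = 0 ∧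
      dot3 (pv (Cf f ν h ν₁ ε) p) (xj f ν h ν₁ ε p) = 0 := by
  constructor
  · calc dot3 (pu (Cf f ν h ν₁ ε) p) (xj f ν h ν₁ ε p)
        = rho f ν h ν₁ ε p * dot3 (kap f ν h ν₁ ε p • pu f p + pu ν p) (xj f ν h ν₁ ε p) :=
          S.dot3_fderiv_Cf_xj hHK.ne' hκ _
      _ = 0 := by rw [dot3_smul_pu_add_pu_xj, mul_zero]
  · calc dot3 (pv (Cf f ν h ν₁ ε) p) (xj f ν h ν₁ ε p)
        = rho f ν h ν₁ ε p * dot3 (kap f ν h ν₁ ε p • pv f p + pv ν p) (xj f ν h ν₁ ε p) :=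
          S.dot3_fderiv_Cf_xj hHK.ne' hκ _
      _ = 0 := by rw [S.dot3_smul_pv_add_pv_xj hε hHK.le, mul_zero]

/-- the vector field x_j is normal to the focal surface C_j at every
point (j = 1,2, encoded by ε = ±1). -/
theorem stmt_9 (f ν h ν₁ : ℝ × ℝ → R3) (H : AdaptedPureFrontal f ν h ν₁)
    (ε : ℝ) (hε : ε = 1 ∨ ε = -1)
    (hHK : ∀ p : ℝ × ℝ, Hm f ν h ν₁ p ^ 2 - Kg f ν h ν₁ p > 0)
    (hκ : ∀ p : ℝ × ℝ, kap f ν h ν₁ ε p ≠ 0) :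
    ∀ p : ℝ × ℝ,
      dot3 (pu (Cf f ν h ν₁ ε) p) (xj f ν h ν₁ ε p) = 0 ∧
      dot3 (pv (Cf f ν h ν₁ ε) p) (xj f ν h ν₁ ε p) = 0 :=
  fun p ↦ stmt_9_general H.frontalFrame hε (hHK p) (hκ p)
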